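/- Consider the downlink MU-MIMO setting: positive integers N, K, M_1,…,M_K with N ≥ Σ_k M_k; matrices H_k ∈ ℂ^{M_k×N} (k = 1,…,K) such that the stacked matrix H = [H_1; …; H_K] has full row rank; reals L_k > 0, σ² > 0, P_T > 0; nonnegative weights η_k, η_{c,k} (k = 1,…,K); M = min_k M_k; N_k = N − Σ_{k'<k} M_{k'}. SNS bases: Ψ_1 = I_N and, for k ≥ 2, Ψ_k ∈ ℂ^{N×N_k} has orthonormal columns and satisfies H_j Ψ_k = 0 for all j < k. BD bases: for each k, Ψ_k^{BD} ∈ ℂ^{N×M_k} has orthonormal columns and satisfies H_j Ψ_k^{BD} = 0 for all j ≠ k. Define: (i) the SNS optimal weighted sum rate R⋆ as the supremum, over all tuples (Q_c, X_1,…,X_K) of Hermitian positive semi-definite matrices with Q_c ∈ ℂ^{N×N}, rank(Q_c) ≤ M, X_k ∈ ℂ^{N_k×N_k}, rank(X_k) ≤ M_k, and tr(Q_c) + Σ_k tr(X_k) ≤ P_T, of the quantity Σ_k η_k η_{c,k} R_c + Σ_k η_k R_k, where R_k = log₂det( I + (1/L_k) H_k Ψ_k X_k Ψ_k^H H_k^H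 [σ² I + (1/L_k) H_k (Σ_{k'<k} Ψ_{k'} X_{k'} Ψ_{k'}^H) H_k^H]^{-1} ), R_{k,c} = log₂det( I + (1/L_k) H_k Q_c H_k^H [σ² I + (1/L_k) H_k (Σ_{k'≤k} Ψ_{k'} X_{k'} Ψ_{k'}^H) H_k^H]^{-1} ), and R_c = min_k R_{k,c}; (ii) the BD-based MIMO-RSMA optimal weighted sum rate R^{BD+MIMO-CM⋆} as the supremum, over tuples (Q_c, S_1,…,S_K) of Hermitian positive semi-definite matrices with Q_c ∈ ℂ^{N×N}, rank(Q_c) ≤ M, S_k ∈ ℂ^{M_k×M_k}, and tr(Q_c) + Σ_k tr(S_k) ≤ P_T, of Σ_k η_k η_{c,k} (min_k R_{k,c}^{BD}) + Σ_k η_k R_k^{BD}, where Q_k = Ψ_k^{BD} S_k (Ψ_k^{BD})^H, R_k^{BD} = log₂det( I + (1/(L_kσ²)) H_k Q_k H_k^H ), and R_{k,c}^{BD} = log₂det( I + (1/L_k) H_k Q_c H_k^H [σ² I + (1/L_k) H_k Q_k H_k^H]^{-1} ); (iii) the BD optimal weighted sum rate R^{BD⋆} as the supremum of Σ_k η_k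 R_k^{BD} over (S_1,…,S_K) Hermitian positive semi-definite with Σ_k tr(S_k) ≤ P_T. Then R⋆ ≥ R^{BD+MIMO-CM⋆} ≥ R^{BD⋆}. -/

import Mathlib

open Matrix
open scoped ComplexOrder

/-- The SNS null-space dimension `N_k = N − Σ_{k'<k} M_{k'}`. -/
def snsDim (N : ℕ) (M : ℕ → ℕ) (k : ℕ) : ℕ := N - ∑ j ∈ Finset.Icc 1 (k - 1), M j

/-- The stacked multi-user channel matrix `H = [H_1; …; H_K]`. -/
def stackMat (N : ℕ) (M : ℕ → ℕ) (H : (j : ℕ) → Matrix (Fin (M j)) (Fin N) ℂ) (i : ℕ) :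
    Matrix ((j : Fin (i - 1)) × Fin (M (j.val + 1))) (Fin N) ℂ :=
  Matrix.of fun p c => H (p.1.val + 1) p.2 c

/-- The SNS private rate `R_k` of user `k`. -/
noncomputable def snsPrivateRate (N : ℕ) (M : ℕ → ℕ)
    (H : (k : ℕ) → Matrix (Fin (M k)) (Fin N) ℂ)
    (Ψ : (k : ℕ) → Matrix (Fin N) (Fin (snsDim N M k)) ℂ)
    (L : ℕ → ℝ) (s : ℝ)
    (X : (k : ℕ) → Matrix (Fin (snsDim N M k)) (Fin (snsDim N M k)) ℂ)
    (k : ℕ) : ℝ :=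
  Real.logb 2
    ((1 + ((1 / L k) • (H k * (Ψ k * X k * (Ψ k)ᴴ) * (H k)ᴴ)) *
        (s • (1 : Matrix (Fin (M k)) (Fin (M k)) ℂ) +
          (1 / L k) •
            (H k * (∑ j ∈ Finset.Icc 1 (k - 1), Ψ j * X j * (Ψ j)ᴴ) * (H k)ᴴ))⁻¹).det.re)

/-- The SNS common-message rate `R_{k,c}` of user `k`. -/
noncomputable def snsCommonRate (N : ℕ) (M : ℕ → ℕ)
    (H : (k : ℕ) → Matrix (Fin (M k)) (Fin N) ℂ)
    (Ψ : (k : ℕ) → Matrix (Fin N) (Fin (snsDim N M k)) ℂ)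
    (L : ℕ → ℝ) (s : ℝ) (Qc : Matrix (Fin N) (Fin N) ℂ)
    (X : (k : ℕ) → Matrix (Fin (snsDim N M k)) (Fin (snsDim N M k)) ℂ)
    (k : ℕ) : ℝ :=
  Real.logb 2
    ((1 + ((1 / L k) • (H k * Qc * (H k)ᴴ)) *
        (s • (1 : Matrix (Fin (M k)) (Fin (M k)) ℂ) +
          (1 / L k) •
            (H k * (∑ j ∈ Finset.Icc 1 k, Ψ j * X j * (Ψ j)ᴴ) * (H k)ᴴ))⁻¹).det.re)

/-- The SNS weighted sum rate `Σ_k η_k η_{c,k} R_c + Σ_k η_k R_k` with `R_c = min_k R_{k,c}`. -/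
noncomputable def snsWSR (K N : ℕ) (hK : 1 ≤ K) (M : ℕ → ℕ)
    (H : (k : ℕ) → Matrix (Fin (M k)) (Fin N) ℂ)
    (Ψ : (k : ℕ) → Matrix (Fin N) (Fin (snsDim N M k)) ℂ)
    (L : ℕ → ℝ) (s : ℝ) (η ηc : ℕ → ℝ) (Qc : Matrix (Fin N) (Fin N) ℂ)
    (X : (k : ℕ) → Matrix (Fin (snsDim N M k)) (Fin (snsDim N M k)) ℂ) : ℝ :=
  (∑ k ∈ Finset.Icc 1 K, η k * ηc k *
      ((Finset.Icc 1 K).inf' (Finset.nonempty_Icc.mpr hK)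
        (snsCommonRate N M H Ψ L s Qc X))) +
  ∑ k ∈ Finset.Icc 1 K, η k * snsPrivateRate N M H Ψ L s X k

/-- The SNS optimal weighted sum rate `R⋆` (problem (17) of the paper). -/
noncomputable def snsOptWSR (K N : ℕ) (hK : 1 ≤ K) (M : ℕ → ℕ)
    (H : (k : ℕ) → Matrix (Fin (M k)) (Fin N) ℂ)
    (Ψ : (k : ℕ) → Matrix (Fin N) (Fin (snsDim N M k)) ℂ)
    (L : ℕ → ℝ) (s : ℝ) (η ηc : ℕ → ℝ) (PT : ℝ) : ℝ :=
  sSup {r : ℝ | ∃ (Qc : Matrix (Fin N) (Fin N) ℂ)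
      (X : (k : ℕ) → Matrix (Fin (snsDim N M k)) (Fin (snsDim N M k)) ℂ),
    Qc.PosSemidef ∧
    Qc.rank ≤ (Finset.Icc 1 K).inf' (Finset.nonempty_Icc.mpr hK) M ∧
    (∀ k ∈ Finset.Icc 1 K, (X k).PosSemidef ∧ (X k).rank ≤ M k) ∧
    Qc.trace.re + ∑ k ∈ Finset.Icc 1 K, (X k).trace.re ≤ PT ∧
    r = snsWSR K N hK M H Ψ L s η ηc Qc X}

/-- The BD private rate `R_k^{BD} = log₂ det(I + (1/(L_k σ²)) H_k Q_k H_kᴴ)`,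
with `Q_k = Ψ_k^{BD} S_k (Ψ_k^{BD})ᴴ`. -/
noncomputable def bdPrivateRate (N : ℕ) (M : ℕ → ℕ)
    (H : (k : ℕ) → Matrix (Fin (M k)) (Fin N) ℂ)
    (Ψbd : (k : ℕ) → Matrix (Fin N) (Fin (M k)) ℂ)
    (L : ℕ → ℝ) (s : ℝ)
    (S : (k : ℕ) → Matrix (Fin (M k)) (Fin (M k)) ℂ) (k : ℕ) : ℝ :=
  Real.logb 2
    ((1 + (1 / (L k * s)) •
        (H k * (Ψbd k * S k * (Ψbd k)ᴴ) * (H k)ᴴ)).det.re)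

/-- The BD-based MIMO-RSMA common-message rate `R_{k,c}^{BD}`. -/
noncomputable def bdCommonRate (N : ℕ) (M : ℕ → ℕ)
    (H : (k : ℕ) → Matrix (Fin (M k)) (Fin N) ℂ)
    (Ψbd : (k : ℕ) → Matrix (Fin N) (Fin (M k)) ℂ)
    (L : ℕ → ℝ) (s : ℝ) (Qc : Matrix (Fin N) (Fin N) ℂ)
    (S : (k : ℕ) → Matrix (Fin (M k)) (Fin (M k)) ℂ) (k : ℕ) : ℝ :=
  Real.logb 2
    ((1 + ((1 / L k) • (H k * Qc * (H k)ᴴ)) *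
        (s • (1 : Matrix (Fin (M k)) (Fin (M k)) ℂ) +
          (1 / L k) • (H k * (Ψbd k * S k * (Ψbd k)ᴴ) * (H k)ᴴ))⁻¹).det.re)

/-- The BD-based MIMO-RSMA optimal weighted sum rate `R^{BD+MIMO-CM⋆}`. -/
noncomputable def bdRsmaOptWSR (K N : ℕ) (hK : 1 ≤ K) (M : ℕ → ℕ)
    (H : (k : ℕ) → Matrix (Fin (M k)) (Fin N) ℂ)
    (Ψbd : (k : ℕ) → Matrix (Fin N) (Fin (M k)) ℂ)
    (L : ℕ → ℝ) (s : ℝ) (η ηc : ℕ → ℝ) (PT : ℝ) : ℝ :=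
  sSup {r : ℝ | ∃ (Qc : Matrix (Fin N) (Fin N) ℂ)
      (S : (k : ℕ) → Matrix (Fin (M k)) (Fin (M k)) ℂ),
    Qc.PosSemidef ∧
    Qc.rank ≤ (Finset.Icc 1 K).inf' (Finset.nonempty_Icc.mpr hK) M ∧
    (∀ k ∈ Finset.Icc 1 K, (S k).PosSemidef) ∧
    Qc.trace.re + ∑ k ∈ Finset.Icc 1 K, (S k).trace.re ≤ PT ∧
    r = (∑ k ∈ Finset.Icc 1 K, η k * ηc k *
          ((Finset.Icc 1 K).inf' (Finset.nonempty_Icc.mpr hK)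
            (bdCommonRate N M H Ψbd L s Qc S))) +
        ∑ k ∈ Finset.Icc 1 K, η k * bdPrivateRate N M H Ψbd L s S k}

/-- The BD optimal weighted sum rate `R^{BD⋆}` (no common message). -/
noncomputable def bdOptWSR (K N : ℕ) (M : ℕ → ℕ)
    (H : (k : ℕ) → Matrix (Fin (M k)) (Fin N) ℂ)
    (Ψbd : (k : ℕ) → Matrix (Fin N) (Fin (M k)) ℂ)
    (L : ℕ → ℝ) (s : ℝ) (η : ℕ → ℝ) (PT : ℝ) : ℝ :=
  sSup {r : ℝ | ∃ S : (k : ℕ) → Matrix (Fin (M k)) (Fin (M k)) ℂ,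
    (∀ k ∈ Finset.Icc 1 K, (S k).PosSemidef) ∧
    (∑ k ∈ Finset.Icc 1 K, (S k).trace.re) ≤ PT ∧
    r = ∑ k ∈ Finset.Icc 1 K, η k * bdPrivateRate N M H Ψbd L s S k}

lemma aux_det_shift {n : ℕ} {P : Matrix (Fin n) (Fin n) ℂ} (hP : P.PosSemidef) (s : ℝ) :
    (s • (1 : Matrix (Fin n) (Fin n) ℂ) + P).det
      = ((∏ i, (s + hP.isHermitian.eigenvalues i) : ℝ) : ℂ) := by
  have h := Matrix.eval_charpoly P (-(s : ℂ))
  rw [hP.isHermitian.charpoly_eq, Polynomial.eval_prod] at h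
  have e : (Matrix.scalar (Fin n) (-(s : ℂ)) - P)
      = -(s • (1 : Matrix (Fin n) (Fin n) ℂ) + P) := by
    ext i j
    by_cases hij : i = j
    · subst hij; simp; ring
    · simp [hij]
  rw [e, Matrix.det_neg] at h
  have h2 : ∀ i ∈ Finset.univ, Polynomial.eval (-(s : ℂ))
      (Polynomial.X - Polynomial.C ((hP.isHermitian.eigenvalues i : ℝ) : ℂ))
      = (-1) * ((s + hP.isHermitian.eigenvalues i : ℝ) : ℂ) := by
    intro i _
    simp; ring
  have h3 := (Finset.prod_congr rfl h2).symm.trans h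
  rw [Finset.prod_mul_distrib, Finset.prod_const, Finset.card_univ] at h3
  have h4 : ((-1 : ℂ)) ^ Fintype.card (Fin n) ≠ 0 := pow_ne_zero _ (by norm_num)
  rw [← mul_left_cancel₀ h4 h3]
  push_cast
  rfl

lemma aux_det_bounds {n : ℕ} {P : Matrix (Fin n) (Fin n) ℂ} (hP : P.PosSemidef) {s : ℝ}
    (hs : 0 < s) {t : ℝ} (ht : P.trace.re ≤ t) :
    ∃ d : ℝ, (s • (1 : Matrix (Fin n) (Fin n) ℂ) + P).det = (d : ℂ) ∧
      s ^ n ≤ d ∧ d ≤ (s + t) ^ n := by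
  refine ⟨_, aux_det_shift hP s, ?_, ?_⟩
  · calc s ^ n = ∏ _i : Fin n, s := by simp
      _ ≤ _ := Finset.prod_le_prod (fun _ _ => hs.le)
        (fun i _ => le_add_of_nonneg_right (hP.eigenvalues_nonneg i))
  · have htr : ∀ i, hP.isHermitian.eigenvalues i ≤ t := by
      intro i
      refine le_trans ?_ ht
      rw [hP.isHermitian.trace_eq_sum_eigenvalues]
      have : (∑ i, ((hP.isHermitian.eigenvalues i : ℝ) : ℂ)).re
          = ∑ i, hP.isHermitian.eigenvalues i := by simp
      refine le_trans ?_ this.symm.le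
      exact Finset.single_le_sum (f := hP.isHermitian.eigenvalues)
        (fun j _ => hP.eigenvalues_nonneg j) (Finset.mem_univ i)
    calc _ ≤ ∏ _i : Fin n, (s + t) := Finset.prod_le_prod
          (fun i _ => add_nonneg hs.le (hP.eigenvalues_nonneg i))
          (fun i _ => by have := htr i; linarith)
      _ = _ := by simp

section
attribute [local instance] Matrix.frobeniusNormedAddCommGroup Matrix.frobeniusNormedSpace

lemma aux_trace_frob {m n : ℕ} (A : Matrix (Fin m) (Fin n) ℂ) :
    (A * Aᴴ).trace.re = ‖A‖ ^ 2 := by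
  rw [Matrix.frobenius_norm_def, ← Real.sqrt_eq_rpow, Real.sq_sqrt (by positivity)]
  simp only [Matrix.trace, Matrix.diag, Matrix.mul_apply, Matrix.conjTranspose_apply,
    Complex.re_sum]
  refine Finset.sum_congr rfl fun i _ => Finset.sum_congr rfl fun j _ => ?_
  have : A i j * star (A i j) = ((‖A i j‖ ^ 2 : ℝ) : ℂ) := by
    have := Complex.mul_conj' (A i j)
    push_cast
    exact this
  rw [this, Complex.ofReal_re]
  norm_num

open scoped MatrixOrder in
lemma aux_trace_bound {m n : ℕ} (H : Matrix (Fin m) (Fin n) ℂ) {Q : Matrix (Fin n) (Fin n) ℂ}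
    (hQ : Q.PosSemidef) : (H * Q * Hᴴ).trace.re ≤ (H * Hᴴ).trace.re * Q.trace.re := by
  obtain ⟨a, rfl⟩ := CStarAlgebra.nonneg_iff_eq_star_mul_self.mp hQ.nonneg
  rw [Matrix.star_eq_conjTranspose]
  have e : H * (aᴴ * a) * Hᴴ = (H * aᴴ) * (H * aᴴ)ᴴ := by
    simp [Matrix.mul_assoc]
  have e2 : (aᴴ * a) = aᴴ * (aᴴ)ᴴ := by simp
  rw [e, e2, aux_trace_frob, aux_trace_frob, aux_trace_frob, ← mul_pow]
  exact pow_le_pow_left₀ (norm_nonneg _) (Matrix.frobenius_norm_mul _ _) 2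
end

lemma aux_trace_re_nonneg {n : ℕ} {Q : Matrix (Fin n) (Fin n) ℂ} (hQ : Q.PosSemidef) :
    0 ≤ Q.trace.re := (Complex.nonneg_iff.mp hQ.trace_nonneg).1

lemma aux_rate_bound {m n : ℕ} (H : Matrix (Fin m) (Fin n) ℂ) {A B : Matrix (Fin n) (Fin n) ℂ}
    (hA : A.PosSemidef) (hB : B.PosSemidef) {l s t : ℝ} (hl : 0 < l) (hs : 0 < s)
    (ht : A.trace.re + B.trace.re ≤ t) :
    Real.logb 2 ((1 + ((1 / l) • (H * A * Hᴴ)) *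
        (s • (1 : Matrix (Fin m) (Fin m) ℂ) + (1 / l) • (H * B * Hᴴ))⁻¹).det.re)
      ≤ Real.logb 2 ((s + (1 / l) * ((H * Hᴴ).trace.re * t)) ^ m / s ^ m) := by
  have hl' : 0 ≤ 1 / l := by positivity
  have hHH : 0 ≤ (H * Hᴴ).trace.re :=
    aux_trace_re_nonneg (Matrix.posSemidef_self_mul_conjTranspose H)
  have p1 : ((1 / l) • (H * A * Hᴴ)).PosSemidef := (hA.mul_mul_conjTranspose_same H).smul hl'
  have p2 : ((1 / l) • (H * B * Hᴴ)).PosSemidef := (hB.mul_mul_conjTranspose_same H).smul hl'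
  obtain ⟨d, hd, hd1, -⟩ := aux_det_bounds p2 hs le_rfl
  have htr : ((1 / l) • (H * A * Hᴴ) + (1 / l) • (H * B * Hᴴ)).trace.re
      ≤ (1 / l) * ((H * Hᴴ).trace.re * t) := by
    rw [Matrix.trace_add, Matrix.trace_smul, Matrix.trace_smul, Complex.add_re,
      Complex.smul_re, Complex.smul_re, smul_eq_mul, smul_eq_mul, ← mul_add]
    refine mul_le_mul_of_nonneg_left ?_ hl'
    calc _ ≤ (H * Hᴴ).trace.re * A.trace.re + (H * Hᴴ).trace.re * B.trace.re :=
          add_le_add (aux_trace_bound H hA) (aux_trace_bound H hB)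
      _ ≤ _ := by rw [← mul_add]; exact mul_le_mul_of_nonneg_left ht hHH
  obtain ⟨e, he, he1, he2⟩ := aux_det_bounds (p1.add p2) hs htr
  have hsn : 0 < s ^ m := by positivity
  have hd0 : 0 < d := hsn.trans_le hd1
  set W := s • (1 : Matrix (Fin m) (Fin m) ℂ) + (1 / l) • (H * B * Hᴴ) with hW
  have hu : IsUnit W.det := by rw [hd]; exact (by exact_mod_cast hd0.ne' : (d : ℂ) ≠ 0).isUnit
  have key : 1 + ((1 / l) • (H * A * Hᴴ)) * W⁻¹
      = (s • (1 : Matrix (Fin m) (Fin m) ℂ) +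
        ((1 / l) • (H * A * Hᴴ) + (1 / l) • (H * B * Hᴴ))) * W⁻¹ := by
    have : s • (1 : Matrix (Fin m) (Fin m) ℂ) +
        ((1 / l) • (H * A * Hᴴ) + (1 / l) • (H * B * Hᴴ)) = W + (1 / l) • (H * A * Hᴴ) := by
      rw [hW]; abel
    rw [this, add_mul, Matrix.mul_nonsing_inv _ hu]
  rw [key, Matrix.det_mul, he, Matrix.det_nonsing_inv, hd, Ring.inverse_eq_inv',
    ← Complex.ofReal_inv, ← Complex.ofReal_mul, Complex.ofReal_re, ← div_eq_mul_inv]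
  have he0 : 0 < e := hsn.trans_le he1
  refine Real.logb_le_logb_of_le (by norm_num) (by positivity) ?_
  exact div_le_div₀ (he0.le.trans he2) he2 hsn hd1

/-- The column space of the SNS basis contains every matrix killed by the earlier channels. -/
lemma aux_proj (K N : ℕ) (M : ℕ → ℕ)
    (hsum : ∑ k ∈ Finset.Icc 1 K, M k ≤ N)
    (H : (k : ℕ) → Matrix (Fin (M k)) (Fin N) ℂ)
    (hrank : (stackMat N M H (K + 1)).rank
      = Fintype.card ((j : Fin K) × Fin (M (j.val + 1))))
    (k : ℕ) (hk : k ∈ Finset.Icc 1 K)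
    (Ψ : Matrix (Fin N) (Fin (snsDim N M k)) ℂ)
    (ho : Ψᴴ * Ψ = 1) (hn : ∀ j, 1 ≤ j → j < k → H j * Ψ = 0)
    {p : ℕ} (B : Matrix (Fin N) (Fin p) ℂ) (hB : ∀ j, 1 ≤ j → j < k → H j * B = 0) :
    Ψ * (Ψᴴ * B) = B := by
  rw [Finset.mem_Icc] at hk
  obtain ⟨hk1, hkK⟩ := hk
  have hli : LinearIndependent ℂ (stackMat N M H (K + 1)).row := by
    rw [linearIndependent_iff_card_eq_finrank_span]
    rw [Matrix.rank_eq_finrank_span_row] at hrank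
    exact hrank.symm
  let f : ((j : Fin (k - 1)) × Fin (M (j.val + 1))) → ((j : Fin K) × Fin (M (j.val + 1))) :=
    fun p => ⟨⟨p.1.val, by omega⟩, p.2⟩
  have hf : Function.Injective f := by
    rintro ⟨⟨a, ha⟩, b⟩ ⟨⟨c, hc⟩, d⟩ h
    simp only [f, Sigma.mk.injEq, Fin.mk.injEq] at h
    obtain ⟨rfl, h2⟩ := h
    have := eq_of_heq h2
    subst this
    rfl
  have hli2 : LinearIndependent ℂ (stackMat N M H k).row := hli.comp f hf
  have hr2 := hli2.rank_matrix
  have hcard : Fintype.card ((j : Fin (k - 1)) × Fin (M (j.val + 1)))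
      = ∑ j ∈ Finset.Icc 1 (k - 1), M j := by
    rw [Fintype.card_sigma]
    simp only [Fintype.card_fin]
    rw [Fin.sum_univ_eq_sum_range (fun j => M (j + 1)) (k - 1), Finset.range_eq_Ico,
      Finset.sum_Ico_add' M 0 (k - 1) 1]
    rfl
  rw [hcard] at hr2
  have hle : ∑ j ∈ Finset.Icc 1 (k - 1), M j ≤ N :=
    le_trans (Finset.sum_le_sum_of_subset (Finset.Icc_subset_Icc_right (by omega))) hsum
  set G := stackMat N M H k with hG
  have hGz : ∀ {q : ℕ} (C : Matrix (Fin N) (Fin q) ℂ),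
      (∀ j, 1 ≤ j → j < k → H j * C = 0) → G * C = 0 := by
    intro q C hC
    ext ⟨j, i⟩ c
    have := congrFun (congrFun (hC (j.val + 1) (by omega) (by omega)) i) c
    simpa [Matrix.mul_apply, hG, stackMat] using this
  have hinj : Function.Injective Ψ.mulVecLin := by
    intro x y hxy
    have := congrArg (fun v => Ψᴴ *ᵥ v) hxy
    simpa [Matrix.mulVec_mulVec, ho] using this
  have hrange : LinearMap.range Ψ.mulVecLin = LinearMap.ker G.mulVecLin := by
    apply Submodule.eq_of_le_of_finrank_eq
    · rintro _ ⟨x, rfl⟩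
      simp [Matrix.mulVec_mulVec, hGz Ψ hn]
    · rw [LinearMap.finrank_range_of_inj hinj]
      have h1 := LinearMap.finrank_range_add_finrank_ker G.mulVecLin
      have h2 : Module.finrank ℂ (LinearMap.range G.mulVecLin) = G.rank := rfl
      rw [h2, hr2] at h1
      simp only [Module.finrank_fin_fun] at h1 ⊢
      unfold snsDim
      omega
  have hGB := hGz B hB
  have hcol : ∀ c, ∃ y, Ψ *ᵥ y = fun i => B i c := by
    intro c
    have : (fun i => B i c) ∈ LinearMap.ker G.mulVecLin := by
      rw [LinearMap.mem_ker]
      ext r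
      exact congrFun (congrFun hGB r) c
    rw [← hrange] at this
    exact this
  choose y hy using hcol
  have hBY : B = Ψ * Matrix.of (fun i c => y c i) := by
    ext i c
    exact (congrFun (hy c) i).symm
  rw [hBY, ← Matrix.mul_assoc Ψᴴ, ho, Matrix.one_mul]

/-- Proposition 1, first chain: `R⋆ ≥ R^{BD+MIMO-CM⋆} ≥ R^{BD⋆}`: the optimal weighted
sum rate of SNS precoding dominates that of BD-based MIMO-RSMA, which dominates that of
plain BD precoding. -/
theorem sns_wsr_ge_bdrsma_ge_bd (K N : ℕ) (hK : 1 ≤ K) (hN : 0 < N)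
    (M : ℕ → ℕ) (hM : ∀ k ∈ Finset.Icc 1 K, 0 < M k)
    (hsum : ∑ k ∈ Finset.Icc 1 K, M k ≤ N)
    (H : (k : ℕ) → Matrix (Fin (M k)) (Fin N) ℂ)
    (hrank : (stackMat N M H (K + 1)).rank
      = Fintype.card ((j : Fin K) × Fin (M (j.val + 1))))
    (L : ℕ → ℝ) (hL : ∀ k ∈ Finset.Icc 1 K, 0 < L k)
    (s : ℝ) (hs : 0 < s) (PT : ℝ) (hPT : 0 < PT)
    (η ηc : ℕ → ℝ)
    (hη : ∀ k ∈ Finset.Icc 1 K, 0 ≤ η k) (hηc : ∀ k ∈ Finset.Icc 1 K, 0 ≤ ηc k)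
    (Ψ : (k : ℕ) → Matrix (Fin N) (Fin (snsDim N M k)) ℂ)
    (hΨ1 : Ψ 1 = (1 : Matrix (Fin N) (Fin N) ℂ))
    (hΨorth : ∀ k ∈ Finset.Icc 2 K, (Ψ k)ᴴ * Ψ k = 1)
    (hΨnull : ∀ k ∈ Finset.Icc 2 K, ∀ j, 1 ≤ j → j < k → H j * Ψ k = 0)
    (Ψbd : (k : ℕ) → Matrix (Fin N) (Fin (M k)) ℂ)
    (hbdorth : ∀ k ∈ Finset.Icc 1 K, (Ψbd k)ᴴ * Ψbd k = 1)
    (hbdnull : ∀ k ∈ Finset.Icc 1 K, ∀ j ∈ Finset.Icc 1 K, j ≠ k → H j * Ψbd k = 0) :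
    bdRsmaOptWSR K N hK M H Ψbd L s η ηc PT ≤ snsOptWSR K N hK M H Ψ L s η ηc PT ∧
    bdOptWSR K N M H Ψbd L s η PT ≤ bdRsmaOptWSR K N hK M H Ψbd L s η ηc PT := by
  have horth : ∀ k ∈ Finset.Icc 1 K, (Ψ k)ᴴ * Ψ k = 1 := by
    intro k hk
    rw [Finset.mem_Icc] at hk
    rcases Nat.lt_or_ge 1 k with h | h
    · exact hΨorth k (Finset.mem_Icc.mpr ⟨h, hk.2⟩)
    · obtain rfl : k = 1 := by omega
      rw [hΨ1]
      exact (by simp : (1 : Matrix (Fin N) (Fin N) ℂ)ᴴ * 1 = 1)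
  have hnull : ∀ k ∈ Finset.Icc 1 K, ∀ j, 1 ≤ j → j < k → H j * Ψ k = 0 := by
    intro k hk j hj hjk
    rw [Finset.mem_Icc] at hk
    exact hΨnull k (Finset.mem_Icc.mpr ⟨by omega, hk.2⟩) j hj hjk
  have hproj : ∀ k ∈ Finset.Icc 1 K, Ψ k * ((Ψ k)ᴴ * Ψbd k) = Ψbd k := by
    intro k hk
    have hk' := Finset.mem_Icc.mp hk
    exact aux_proj K N M hsum H hrank k hk (Ψ k) (horth k hk) (hnull k hk) (Ψbd k)
      (fun j hj hjk => hbdnull k hk j (Finset.mem_Icc.mpr ⟨hj, by omega⟩) (by omega))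
  -- boundedness of the SNS rates
  have hbdd : BddAbove {r : ℝ | ∃ (Qc : Matrix (Fin N) (Fin N) ℂ)
      (X : (k : ℕ) → Matrix (Fin (snsDim N M k)) (Fin (snsDim N M k)) ℂ),
      Qc.PosSemidef ∧
      Qc.rank ≤ (Finset.Icc 1 K).inf' (Finset.nonempty_Icc.mpr hK) M ∧
      (∀ k ∈ Finset.Icc 1 K, (X k).PosSemidef ∧ (X k).rank ≤ M k) ∧
      Qc.trace.re + ∑ k ∈ Finset.Icc 1 K, (X k).trace.re ≤ PT ∧
      r = snsWSR K N hK M H Ψ L s η ηc Qc X} := by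
    let b : ℕ → ℝ := fun k =>
      Real.logb 2 ((s + (1 / L k) * ((H k * (H k)ᴴ).trace.re * PT)) ^ (M k) / s ^ (M k))
    refine ⟨(∑ k ∈ Finset.Icc 1 K, η k * ηc k * b k) + ∑ k ∈ Finset.Icc 1 K, η k * b k, ?_⟩
    rintro r ⟨Qc, X, hQ, -, hX, htr, rfl⟩
    have hpsd : ∀ k ∈ Finset.Icc 1 K, (Ψ k * X k * (Ψ k)ᴴ).PosSemidef :=
      fun k hk => (hX k hk).1.mul_mul_conjTranspose_same (Ψ k)
    have htrk : ∀ k ∈ Finset.Icc 1 K, (Ψ k * X k * (Ψ k)ᴴ).trace = (X k).trace := by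
      intro k hk
      rw [Matrix.trace_mul_comm, ← Matrix.mul_assoc, horth k hk, Matrix.one_mul]
    have hsub : ∀ k ∈ Finset.Icc 1 K, Finset.Icc 1 k ⊆ Finset.Icc 1 K := fun k hk =>
      Finset.Icc_subset_Icc_right (Finset.mem_Icc.mp hk).2
    have hsumpsd : ∀ T ⊆ Finset.Icc 1 K,
        (∑ j ∈ T, Ψ j * X j * (Ψ j)ᴴ).PosSemidef := fun T hT =>
      Matrix.posSemidef_sum T (fun j hj => hpsd j (hT hj))
    have hsumtr : ∀ T ⊆ Finset.Icc 1 K,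
        (∑ j ∈ T, Ψ j * X j * (Ψ j)ᴴ).trace.re = ∑ j ∈ T, (X j).trace.re := by
      intro T hT
      rw [Matrix.trace_sum, Complex.re_sum]
      exact Finset.sum_congr rfl fun j hj => by rw [htrk j (hT hj)]
    have hsumle : ∀ T ⊆ Finset.Icc 1 K,
        ∑ j ∈ T, (X j).trace.re ≤ ∑ j ∈ Finset.Icc 1 K, (X j).trace.re := fun T hT =>
      Finset.sum_le_sum_of_subset_of_nonneg hT
        (fun j hj _ => aux_trace_re_nonneg (hX j hj).1)
    have hc : ∀ k ∈ Finset.Icc 1 K, snsCommonRate N M H Ψ L s Qc X k ≤ b k := by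
      intro k hk
      refine aux_rate_bound (H k) hQ (hsumpsd _ (hsub k hk)) (hL k hk) hs ?_
      rw [hsumtr _ (hsub k hk)]
      have := hsumle _ (hsub k hk)
      linarith
    have hp : ∀ k ∈ Finset.Icc 1 K, snsPrivateRate N M H Ψ L s X k ≤ b k := by
      intro k hk
      have hk' := Finset.mem_Icc.mp hk
      have hsub' : Finset.Icc 1 (k - 1) ⊆ Finset.Icc 1 K :=
        Finset.Icc_subset_Icc_right (by omega)
      refine aux_rate_bound (H k) (hpsd k hk) (hsumpsd _ hsub') (hL k hk) hs ?_
      rw [hsumtr _ hsub', htrk k hk]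
      have h1 := hsumle _ (hsub k hk)
      have h2 : ∑ j ∈ Finset.Icc 1 k, (X j).trace.re
          = ∑ j ∈ Finset.Icc 1 (k - 1), (X j).trace.re + (X k).trace.re := by
        obtain ⟨m, rfl⟩ : ∃ m, k = m + 1 := ⟨k - 1, by omega⟩
        rw [Finset.sum_Icc_succ_top (by omega)]
        simp
      have h3 := aux_trace_re_nonneg hQ
      linarith
    unfold snsWSR
    refine add_le_add (Finset.sum_le_sum fun k hk => ?_) (Finset.sum_le_sum fun k hk => ?_)
    · exact mul_le_mul_of_nonneg_left ((Finset.inf'_le _ hk).trans (hc k hk))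
        (mul_nonneg (hη k hk) (hηc k hk))
    · exact mul_le_mul_of_nonneg_left (hp k hk) (hη k hk)
  -- the BD-RSMA rates are SNS rates
  have hsubset : {r : ℝ | ∃ (Qc : Matrix (Fin N) (Fin N) ℂ)
      (S : (k : ℕ) → Matrix (Fin (M k)) (Fin (M k)) ℂ),
      Qc.PosSemidef ∧
      Qc.rank ≤ (Finset.Icc 1 K).inf' (Finset.nonempty_Icc.mpr hK) M ∧
      (∀ k ∈ Finset.Icc 1 K, (S k).PosSemidef) ∧
      Qc.trace.re + ∑ k ∈ Finset.Icc 1 K, (S k).trace.re ≤ PT ∧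
      r = (∑ k ∈ Finset.Icc 1 K, η k * ηc k *
            ((Finset.Icc 1 K).inf' (Finset.nonempty_Icc.mpr hK)
              (bdCommonRate N M H Ψbd L s Qc S))) +
          ∑ k ∈ Finset.Icc 1 K, η k * bdPrivateRate N M H Ψbd L s S k} ⊆
      {r : ℝ | ∃ (Qc : Matrix (Fin N) (Fin N) ℂ)
      (X : (k : ℕ) → Matrix (Fin (snsDim N M k)) (Fin (snsDim N M k)) ℂ),
      Qc.PosSemidef ∧
      Qc.rank ≤ (Finset.Icc 1 K).inf' (Finset.nonempty_Icc.mpr hK) M ∧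
      (∀ k ∈ Finset.Icc 1 K, (X k).PosSemidef ∧ (X k).rank ≤ M k) ∧
      Qc.trace.re + ∑ k ∈ Finset.Icc 1 K, (X k).trace.re ≤ PT ∧
      r = snsWSR K N hK M H Ψ L s η ηc Qc X} := by
    rintro r ⟨Qc, S, hQ, hQr, hS, htr, rfl⟩
    let X : (k : ℕ) → Matrix (Fin (snsDim N M k)) (Fin (snsDim N M k)) ℂ :=
      fun k => ((Ψ k)ᴴ * Ψbd k) * S k * ((Ψ k)ᴴ * Ψbd k)ᴴ
    have hcov : ∀ k ∈ Finset.Icc 1 K,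
        Ψ k * X k * (Ψ k)ᴴ = Ψbd k * S k * (Ψbd k)ᴴ := by
      intro k hk
      have e : Ψ k * X k * (Ψ k)ᴴ
          = (Ψ k * ((Ψ k)ᴴ * Ψbd k)) * S k * (Ψ k * ((Ψ k)ᴴ * Ψbd k))ᴴ := by
        simp only [X, Matrix.conjTranspose_mul, Matrix.mul_assoc]
      rw [e, hproj k hk]
    have hXtr : ∀ k ∈ Finset.Icc 1 K, (X k).trace = (S k).trace := by
      intro k hk
      have h1 : (Ψ k * X k * (Ψ k)ᴴ).trace = (X k).trace := by
        rw [Matrix.trace_mul_comm, ← Matrix.mul_assoc, horth k hk, Matrix.one_mul]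
      have h2 : (Ψbd k * S k * (Ψbd k)ᴴ).trace = (S k).trace := by
        rw [Matrix.trace_mul_comm, ← Matrix.mul_assoc, hbdorth k hk, Matrix.one_mul]
      rw [← h1, hcov k hk, h2]
    have hzero : ∀ k ∈ Finset.Icc 1 K, ∀ j ∈ Finset.Icc 1 K, k ≠ j →
        H k * (Ψ j * X j * (Ψ j)ᴴ) * (H k)ᴴ = 0 := by
      intro k hk j hj hkj
      rw [hcov j hj, ← Matrix.mul_assoc, ← Matrix.mul_assoc, hbdnull j hj k hk hkj]
      simp
    have hint : ∀ k ∈ Finset.Icc 1 K,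
        H k * (∑ j ∈ Finset.Icc 1 (k - 1), Ψ j * X j * (Ψ j)ᴴ) * (H k)ᴴ = 0 := by
      intro k hk
      have hk' := Finset.mem_Icc.mp hk
      rw [Matrix.mul_sum, Matrix.sum_mul]
      refine Finset.sum_eq_zero fun j hj => ?_
      rw [Finset.mem_Icc] at hj
      exact hzero k hk j (Finset.mem_Icc.mpr ⟨hj.1, by omega⟩) (by omega)
    have hint2 : ∀ k ∈ Finset.Icc 1 K,
        H k * (∑ j ∈ Finset.Icc 1 k, Ψ j * X j * (Ψ j)ᴴ) * (H k)ᴴ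
          = H k * (Ψbd k * S k * (Ψbd k)ᴴ) * (H k)ᴴ := by
      intro k hk
      have hk' := Finset.mem_Icc.mp hk
      rw [Matrix.mul_sum, Matrix.sum_mul, Finset.sum_eq_single k, hcov k hk]
      · intro j hj hjk
        rw [Finset.mem_Icc] at hj
        exact hzero k hk j (Finset.mem_Icc.mpr ⟨hj.1, by omega⟩) (Ne.symm hjk)
      · intro h
        exact absurd (Finset.mem_Icc.mpr ⟨hk'.1, le_rfl⟩) h
    have hcr : ∀ k ∈ Finset.Icc 1 K,
        bdCommonRate N M H Ψbd L s Qc S k = snsCommonRate N M H Ψ L s Qc X k := by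
      intro k hk
      unfold bdCommonRate snsCommonRate
      rw [hint2 k hk]
    have hpr : ∀ k ∈ Finset.Icc 1 K,
        bdPrivateRate N M H Ψbd L s S k = snsPrivateRate N M H Ψ L s X k := by
      intro k hk
      unfold bdPrivateRate snsPrivateRate
      rw [hint k hk, hcov k hk, smul_zero, add_zero]
      have hinv : (s • (1 : Matrix (Fin (M k)) (Fin (M k)) ℂ))⁻¹ = s⁻¹ • 1 := by
        apply Matrix.inv_eq_right_inv
        rw [smul_mul_smul_comm, mul_inv_cancel₀ hs.ne', one_smul, Matrix.one_mul]
      rw [hinv, smul_mul_smul_comm, Matrix.mul_one]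
      congr 5
      field_simp
    refine ⟨Qc, X, hQ, hQr, fun k hk => ⟨(hS k hk).mul_mul_conjTranspose_same _, ?_⟩, ?_, ?_⟩
    · refine (Matrix.rank_mul_le_left _ _).trans ((Matrix.rank_mul_le_right _ _).trans ?_)
      simpa using Matrix.rank_le_card_width (S k)
    · rw [Finset.sum_congr rfl fun k hk => by rw [hXtr k hk]]
      exact htr
    · unfold snsWSR
      rw [Finset.inf'_congr _ rfl hcr]
      congr 1
      exact Finset.sum_congr rfl fun k hk => by rw [hpr k hk]
  constructor
  · unfold bdRsmaOptWSR snsOptWSR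
    refine csSup_le_csSup hbdd ?_ hsubset
    exact ⟨_, 0, fun _ => 0, Matrix.PosSemidef.zero, by simp, fun _ _ => Matrix.PosSemidef.zero,
      by simpa using hPT.le, rfl⟩
  · unfold bdOptWSR bdRsmaOptWSR
    refine csSup_le_csSup (hbdd.mono hsubset) ?_ ?_
    · exact ⟨_, fun _ => 0, fun _ _ => Matrix.PosSemidef.zero, by simpa using hPT.le, rfl⟩
    · rintro r ⟨S, hS, htr, rfl⟩
      refine ⟨0, S, Matrix.PosSemidef.zero, by simp, hS, by simpa using htr, ?_⟩
      have h0 : bdCommonRate N M H Ψbd L s 0 S = fun _ => 0 := by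
        funext k
        simp [bdCommonRate]
      rw [h0, Finset.inf'_const]
      simp
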